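/- Let K₁, K₂ ∈ 𝒦 be 1-stable with parameters σ₁ > 0 and σ₂ > 0 respectively. Then the convolution K₃(x,y) = ∫_{ℝ⁺} K₁(x,z) K₂(z,y) dz is a kernel in 𝒦 that is 1-stable with parameter σ₁ + σ₂. -/

import Mathlib

open MeasureTheory Set Filter
open scoped ENNReal

/-- The dyadic distance on ℝ⁺: the infimum of the lengths of the dyadic
intervals `[k·2^{-j}, (k+1)·2^{-j})` containing both points (and `0` on the diagonal). -/
noncomputable def dyadicDist (x y : ℝ) : ℝ :=
  if x = y then 0
  else sInf {r : ℝ | ∃ (j : ℤ) (k : ℕ), r = (2:ℝ) ^ (-j) ∧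
    x ∈ Set.Ico ((k : ℝ) * (2:ℝ) ^ (-j)) (((k : ℝ) + 1) * (2:ℝ) ^ (-j)) ∧
    y ∈ Set.Ico ((k : ℝ) * (2:ℝ) ^ (-j)) (((k : ℝ) + 1) * (2:ℝ) ^ (-j))}

/-!
Group the points `z` by the level `m` at which they part from `x`, i.e. `δ(x, z) = 2 ^ m`.
Whatever `x` is, Lebesgue measure induces on the levels the measure `μ {m} = 2 ^ (m - 1)`, so a
kernel in `𝒦` is the same thing as a density `k` on `ℤ` with `∫ k dμ = 1`. If `δ(x, y) = 2 ^ m`,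
the dyadic tree leaves three possibilities for `z`: it is closer than `2 ^ m` to `x` and at
distance `2 ^ m` from `y`, or the other way round, or it is at the same distance `2 ^ j`, `j > m`,
from both. Hence the convolution has density
`(∑_{j < m} k₁ μ) k₂(m) + k₁(m) (∑_{j < m} k₂ μ) + ∑_{j > m} k₁ k₂ μ`.
After multiplication by `4 ^ m` the first two terms tend to `σ₂` and `σ₁`; the third is at most a
constant times `∑_{j > m} k₁ μ`, because `4 ^ m k₂(j) ≤ 4 ^ j k₂(j)` is bounded.
-/

open scoped Topology

section Index

/-- The index `n` of the dyadic interval `[n * 2 ^ j, (n + 1) * 2 ^ j)` containing `x`. Here `j`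
is the binary logarithm of the length, whereas the intervals in `dyadicDist` have length
`2 ^ (-j)`. -/
noncomputable def dyadicIndex (j : ℤ) (x : ℝ) : ℤ := ⌊x / 2 ^ j⌋

lemma dyadicIndex_add_one (j : ℤ) (x : ℝ) : dyadicIndex (j + 1) x = dyadicIndex j x / 2 := by
  rw [dyadicIndex, zpow_add_one₀ two_ne_zero, ← div_div]
  exact Int.floor_div_natCast (x / 2 ^ j) 2

lemma dyadicIndex_eq_iff {j n : ℤ} {x : ℝ} :
    dyadicIndex j x = n ↔ x ∈ Ico ((n : ℝ) * 2 ^ j) ((n + 1) * 2 ^ j) := by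
  have hpos : (0 : ℝ) < 2 ^ j := by positivity
  rw [dyadicIndex, Int.floor_eq_iff, le_div_iff₀ hpos, div_lt_iff₀ hpos, mem_Ico]

lemma dyadicIndex_nonneg {x : ℝ} (hx : 0 ≤ x) (j : ℤ) : 0 ≤ dyadicIndex j x :=
  Int.floor_nonneg.2 (by positivity)

lemma dyadicIndex_zpow_self (j : ℤ) : dyadicIndex j (2 ^ j) = 1 := by
  rw [dyadicIndex, div_self (by positivity), Int.floor_one]

lemma dyadicIndex_eq_zero {j : ℤ} {x : ℝ} (hx : 0 ≤ x) (hxj : x < 2 ^ j) :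
    dyadicIndex j x = 0 :=
  dyadicIndex_eq_iff.2 (by simpa using ⟨hx, hxj⟩)

lemma dyadicIndex_eq_of_le {x y : ℝ} {i j : ℤ} (hij : i ≤ j)
    (h : dyadicIndex i x = dyadicIndex i y) : dyadicIndex j x = dyadicIndex j y := by
  induction j, hij using Int.leInduction with
  | base => exact h
  | succ n _ ih => rw [dyadicIndex_add_one, dyadicIndex_add_one, ih]

lemma abs_sub_lt_of_dyadicIndex_eq {x y : ℝ} {j : ℤ} (h : dyadicIndex j x = dyadicIndex j y) :
    |x - y| < 2 ^ j := by
  have hpos : (0 : ℝ) < 2 ^ j := by positivity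
  have hlt := Int.abs_sub_lt_one_of_floor_eq_floor h
  rwa [← sub_div, abs_div, abs_of_pos hpos, div_lt_one hpos] at hlt

lemma exists_dyadicIndex_eq {x y : ℝ} (hx : 0 ≤ x) (hy : 0 ≤ y) :
    ∃ j, dyadicIndex j x = dyadicIndex j y := by
  obtain ⟨n, hn⟩ := pow_unbounded_of_one_lt (max x y) one_lt_two
  refine ⟨n, ?_⟩
  rw [dyadicIndex_eq_zero hx ((le_max_left x y).trans_lt hn),
    dyadicIndex_eq_zero hy ((le_max_right x y).trans_lt hn)]

lemma measurable_dyadicIndex (j : ℤ) : Measurable (dyadicIndex j) := by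
  unfold dyadicIndex
  fun_prop

lemma volume_dyadicIndex_eq (j n : ℤ) :
    volume {z | dyadicIndex j z = n} = ENNReal.ofReal (2 ^ j) := by
  simp only [dyadicIndex_eq_iff, ofPred_mem_eq, Real.volume_Ico]
  congr 1
  ring

end Index

section Level

/-- The level `m` at which `x` and `y` part in the dyadic tree: the logarithm in base `2` of
their dyadic distance. It has the junk value `0` if `x = y`, or if no dyadic interval contains
both points. -/
noncomputable def dyadicLevel (x y : ℝ) : ℤ :=
  sInf {j | dyadicIndex j x = dyadicIndex j y}

lemma dyadicLevel_comm (x y : ℝ) : dyadicLevel x y = dyadicLevel y x := by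
  simp only [dyadicLevel, eq_comm]

lemma bddBelow_setOf_dyadicIndex_eq {x y : ℝ} (hxy : x ≠ y) :
    BddBelow {j | dyadicIndex j x = dyadicIndex j y} := by
  obtain ⟨n, hn, -⟩ := exists_mem_Ico_zpow (abs_sub_pos.2 hxy) one_lt_two
  exact ⟨n, fun j hj =>
    ((zpow_lt_zpow_iff_right₀ one_lt_two).1 (hn.trans_lt (abs_sub_lt_of_dyadicIndex_eq hj))).le⟩

lemma dyadicLevel_le_iff {x y : ℝ} (hx : 0 ≤ x) (hy : 0 ≤ y) (hxy : x ≠ y) {j : ℤ} :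
    dyadicLevel x y ≤ j ↔ dyadicIndex j x = dyadicIndex j y := by
  have hbdd := bddBelow_setOf_dyadicIndex_eq hxy
  refine ⟨fun hj => dyadicIndex_eq_of_le hj ?_, fun hj => csInf_le hbdd hj⟩
  exact Int.csInf_mem (exists_dyadicIndex_eq hx hy) hbdd

lemma dyadicLevel_eq_of_dyadicIndex {x y : ℝ} {m : ℤ} (heq : dyadicIndex m x = dyadicIndex m y)
    (hne : dyadicIndex (m - 1) x ≠ dyadicIndex (m - 1) y) : dyadicLevel x y = m := by
  refine IsLeast.csInf_eq ⟨heq, fun j hj => ?_⟩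
  by_contra! hjm
  exact hne (dyadicIndex_eq_of_le (Int.le_sub_one_of_lt hjm) hj)

lemma dyadicLevel_eq_iff {x y : ℝ} (hx : 0 ≤ x) (hy : 0 ≤ y) (hxy : x ≠ y) {m : ℤ} :
    dyadicLevel x y = m ↔
      dyadicIndex m x = dyadicIndex m y ∧ dyadicIndex (m - 1) x ≠ dyadicIndex (m - 1) y := by
  rw [ne_eq, ← dyadicLevel_le_iff hx hy hxy, ← dyadicLevel_le_iff hx hy hxy]
  omega

lemma dyadicLevel_zero_zpow (m : ℤ) : dyadicLevel 0 (2 ^ (m - 1)) = m := by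
  have index_zero (j : ℤ) : dyadicIndex j 0 = 0 := dyadicIndex_eq_zero le_rfl (by positivity)
  apply dyadicLevel_eq_of_dyadicIndex
  · rw [index_zero, dyadicIndex_eq_zero (by positivity)
      (zpow_lt_zpow_right₀ one_lt_two (sub_one_lt m))]
  · rw [index_zero, dyadicIndex_zpow_self]
    exact zero_ne_one

lemma dyadicLevel_eq_of_lt {x y z : ℝ} (hx : 0 ≤ x) (hy : 0 ≤ y) (hz : 0 ≤ z) (hxy : x ≠ y)
    (hxz : x ≠ z) (h : dyadicLevel x z < dyadicLevel x y) :
    dyadicLevel y z = dyadicLevel x y := by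
  obtain ⟨heq, hne⟩ := (dyadicLevel_eq_iff hx hy hxy).1 rfl
  have hxz_eq := (dyadicLevel_le_iff hx hz hxz).1 (Int.le_sub_one_of_lt h)
  exact dyadicLevel_eq_of_dyadicIndex (heq.symm.trans ((dyadicLevel_le_iff hx hz hxz).1 h.le))
    (hxz_eq ▸ hne.symm)

-- A dyadic interval has only two halves.
lemma dyadicLevel_lt_of_eq {x y z : ℝ} (hx : 0 ≤ x) (hy : 0 ≤ y) (hz : 0 ≤ z) (hxy : x ≠ y)
    (hxz : x ≠ z) (hyz : y ≠ z) (h : dyadicLevel x z = dyadicLevel x y) :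
    dyadicLevel y z < dyadicLevel x y := by
  obtain ⟨hxy_eq, hxy_ne⟩ := (dyadicLevel_eq_iff hx hy hxy).1 rfl
  obtain ⟨hxz_eq, hxz_ne⟩ := (dyadicLevel_eq_iff hx hz hxz).1 h
  have index_eq (t : ℝ) :
      dyadicIndex (dyadicLevel x y) t = dyadicIndex (dyadicLevel x y - 1) t / 2 := by
    rw [← dyadicIndex_add_one, sub_add_cancel]
  rw [index_eq, index_eq] at hxy_eq hxz_eq
  refine Int.lt_of_le_sub_one ((dyadicLevel_le_iff hy hz hyz).2 ?_)
  omega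

end Level

section Distance

lemma dyadicDist_self (x : ℝ) : dyadicDist x x = 0 := if_pos rfl

lemma dyadicDist_eq_zpow {x y : ℝ} (hx : 0 ≤ x) (hy : 0 ≤ y) (hxy : x ≠ y) :
    dyadicDist x y = 2 ^ dyadicLevel x y := by
  rw [dyadicDist, if_neg hxy]
  refine IsLeast.csInf_eq ⟨?_, ?_⟩
  · obtain ⟨n, hn⟩ := Int.eq_ofNat_of_zero_le (dyadicIndex_nonneg hx (dyadicLevel x y))
    have hindex := (dyadicLevel_le_iff hx hy hxy).1 le_rfl
    refine ⟨-dyadicLevel x y, n, by rw [neg_neg], ?_, ?_⟩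
    · simpa only [neg_neg, Int.cast_natCast] using dyadicIndex_eq_iff.1 hn
    · simpa only [neg_neg, Int.cast_natCast] using dyadicIndex_eq_iff.1 (hindex.symm.trans hn)
  · rintro _ ⟨j, k, rfl, hxk, hyk⟩
    have hxk' : dyadicIndex (-j) x = k := dyadicIndex_eq_iff.2 hxk
    have hyk' : dyadicIndex (-j) y = k := dyadicIndex_eq_iff.2 hyk
    exact zpow_le_zpow_right₀ one_le_two
      ((dyadicLevel_le_iff hx hy hxy).2 (hxk'.trans hyk'.symm))

lemma dyadicDist_zero_zpow (m : ℤ) : dyadicDist 0 (2 ^ (m - 1)) = 2 ^ m := by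
  have hpos : (0 : ℝ) < 2 ^ (m - 1) := by positivity
  rw [dyadicDist_eq_zpow le_rfl hpos.le hpos.ne, dyadicLevel_zero_zpow]

lemma dyadicDist_pos {x y : ℝ} (hx : 0 ≤ x) (hy : 0 ≤ y) (hxy : x ≠ y) : 0 < dyadicDist x y := by
  rw [dyadicDist_eq_zpow hx hy hxy]
  positivity

lemma dyadicDist_eq_zero_iff {x y : ℝ} (hx : 0 ≤ x) (hy : 0 ≤ y) :
    dyadicDist x y = 0 ↔ x = y := by
  refine ⟨fun h => ?_, fun h => h ▸ dyadicDist_self x⟩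
  by_contra hxy
  exact (dyadicDist_pos hx hy hxy).ne' h

end Distance

section LevelMeasure

lemma dyadicLevel_eq_iff_or {x y : ℝ} {m : ℤ} :
    dyadicLevel x y = m ↔
      (dyadicIndex m x = dyadicIndex m y ∧ dyadicIndex (m - 1) x ≠ dyadicIndex (m - 1) y) ∨
      (m = 0 ∧ ∀ j, dyadicIndex j x = dyadicIndex j y →
        dyadicIndex (j - 1) x = dyadicIndex (j - 1) y) := by
  by_cases h : ∃ j, dyadicIndex j x = dyadicIndex j y ∧
      dyadicIndex (j - 1) x ≠ dyadicIndex (j - 1) y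
  · obtain ⟨j, heq, hne⟩ := h
    refine ⟨?_, ?_⟩
    · rintro rfl
      rw [dyadicLevel_eq_of_dyadicIndex heq hne]
      exact .inl ⟨heq, hne⟩
    · rintro (⟨heq', hne'⟩ | ⟨-, hall⟩)
      · exact dyadicLevel_eq_of_dyadicIndex heq' hne'
      · exact absurd (hall j heq) hne
  · push Not at h
    have hlevel : dyadicLevel x y = 0 := by
      rcases eq_empty_or_nonempty {j | dyadicIndex j x = dyadicIndex j y} with hempty | hnonempty
      · rw [dyadicLevel, hempty, Int.csInf_empty]
      · refine Int.csInf_of_not_bddBelow fun hbdd => ?_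
        have hpred := h _ (Int.csInf_mem hnonempty hbdd)
        exact (csInf_le hbdd hpred).not_gt (sub_one_lt _)
    rw [hlevel]
    exact ⟨fun hm => .inr ⟨hm.symm, h⟩,
      fun hm => (hm.resolve_left fun hparts => hparts.2 (h m hparts.1)).1.symm⟩

lemma measurable_uncurry_dyadicLevel : Measurable (Function.uncurry dyadicLevel) := by
  have hindex (j : ℤ) :
      MeasurableSet {p : ℝ × ℝ | dyadicIndex j p.1 = dyadicIndex j p.2} :=
    measurableSet_eq_fun ((measurable_dyadicIndex j).comp measurable_fst)
      ((measurable_dyadicIndex j).comp measurable_snd)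
  have hnever : MeasurableSet {p : ℝ × ℝ | ∀ j, dyadicIndex j p.1 = dyadicIndex j p.2 →
      dyadicIndex (j - 1) p.1 = dyadicIndex (j - 1) p.2} := by
    rw [ofPred_forall]
    exact .iInter fun j => (hindex j).imp (hindex (j - 1))
  refine measurable_to_countable' fun m => ?_
  simp only [preimage, Function.uncurry_def, mem_singleton_iff, dyadicLevel_eq_iff_or]
  exact ((hindex m).inter (hindex (m - 1)).compl).union
    ((MeasurableSet.const _).inter hnever)

lemma measurable_dyadicLevel (x : ℝ) : Measurable (dyadicLevel x) :=
  measurable_uncurry_dyadicLevel.of_uncurry_left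

/-- The law of the dyadic level `dyadicLevel x z` when `z` is distributed on `ℝ⁺` according to
Lebesgue measure; it does not depend on `x`, see `measurePreserving_dyadicLevel`. -/
noncomputable def dyadicLevelMeasure : Measure ℤ :=
  Measure.count.withDensity fun m => ENNReal.ofReal (2 ^ (m - 1))

instance : SFinite dyadicLevelMeasure :=
  inferInstanceAs (SFinite (Measure.count.withDensity _))

lemma dyadicLevelMeasure_singleton (m : ℤ) :
    dyadicLevelMeasure {m} = ENNReal.ofReal (2 ^ (m - 1)) := by
  rw [dyadicLevelMeasure, withDensity_apply _ (measurableSet_singleton m), lintegral_singleton,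
    Measure.count_singleton, mul_one]

lemma preimage_dyadicLevel_ae_eq {x : ℝ} (hx : 0 ≤ x) (m : ℤ) :
    dyadicLevel x ⁻¹' {m} =ᵐ[volume.restrict (Ici 0)]
      ({z | dyadicIndex m z = dyadicIndex m x} \
        {z | dyadicIndex (m - 1) z = dyadicIndex (m - 1) x} : Set ℝ) := by
  filter_upwards [ae_restrict_mem measurableSet_Ici, Measure.ae_ne _ x] with z hz hzx
  refine propext ((dyadicLevel_eq_iff hx hz hzx.symm).trans ?_)
  rw [eq_comm, ne_comm]
  rfl

lemma measurePreserving_dyadicLevel {x : ℝ} (hx : 0 ≤ x) :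
    MeasurePreserving (dyadicLevel x) (volume.restrict (Ici 0)) dyadicLevelMeasure := by
  refine ⟨measurable_dyadicLevel x, Measure.ext_of_singleton fun m => ?_⟩
  have hmeas (j : ℤ) : MeasurableSet {z | dyadicIndex j z = dyadicIndex j x} :=
    measurable_dyadicIndex j (measurableSet_singleton _)
  have hnonneg : {z | dyadicIndex m z = dyadicIndex m x} ⊆ Ici 0 := fun z hz =>
    (by have := dyadicIndex_nonneg hx m; positivity :
      (0 : ℝ) ≤ dyadicIndex m x * 2 ^ m).trans (dyadicIndex_eq_iff.1 hz).1
  have hhalf : {z | dyadicIndex (m - 1) z = dyadicIndex (m - 1) x} ⊆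
      {z | dyadicIndex m z = dyadicIndex m x} := fun z hz =>
    dyadicIndex_eq_of_le (sub_one_lt m).le hz
  rw [Measure.map_apply (measurable_dyadicLevel x) (measurableSet_singleton m),
    measure_congr (preimage_dyadicLevel_ae_eq hx m),
    Measure.restrict_apply ((hmeas m).diff (hmeas (m - 1))),
    inter_eq_left.2 (sdiff_subset.trans hnonneg),
    measure_sdiff hhalf (hmeas (m - 1)).nullMeasurableSet (by simp [volume_dyadicIndex_eq]),
    volume_dyadicIndex_eq, volume_dyadicIndex_eq, dyadicLevelMeasure_singleton,
    ← ENNReal.ofReal_sub _ (by positivity), zpow_sub_one₀ two_ne_zero]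
  congr 1
  ring

lemma integral_comp_dyadicLevel {x : ℝ} (hx : 0 ≤ x) (k : ℤ → ℝ) :
    ∫ z in Ici 0, k (dyadicLevel x z) = ∫ j, k j ∂dyadicLevelMeasure := by
  rw [← (measurePreserving_dyadicLevel hx).map_eq, integral_map
    (measurable_dyadicLevel x).aemeasurable (measurable_of_countable k).aestronglyMeasurable]

lemma measurePreserving_dyadicLevel_prod {x : ℝ} (hx : 0 ≤ x) :
    MeasurePreserving (fun p : ℝ × ℝ => (dyadicLevel x p.1, dyadicLevel p.1 p.2))
      ((volume.restrict (Ici 0)).prod (volume.restrict (Ici 0)))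
      (dyadicLevelMeasure.prod dyadicLevelMeasure) := by
  refine (measurePreserving_dyadicLevel hx).skew_product measurable_uncurry_dyadicLevel ?_
  filter_upwards [ae_restrict_mem measurableSet_Ici] with z hz
  exact (measurePreserving_dyadicLevel hz).map_eq

lemma integral_integral_dyadicLevel {k₁ k₂ : ℤ → ℝ} (hk₁ : Integrable k₁ dyadicLevelMeasure)
    (hk₂ : Integrable k₂ dyadicLevelMeasure) {x : ℝ} (hx : 0 ≤ x) :
    ∫ y in Ici 0, ∫ z in Ici 0, k₁ (dyadicLevel x z) * k₂ (dyadicLevel z y) =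
      (∫ j, k₁ j ∂dyadicLevelMeasure) * ∫ j, k₂ j ∂dyadicLevelMeasure := by
  have hint := (measurePreserving_dyadicLevel_prod hx).integrable_comp_of_integrable
    (hk₁.mul_prod hk₂)
  rw [integral_integral_swap (f := fun y z => k₁ (dyadicLevel x z) * k₂ (dyadicLevel z y))
    hint.swap, ← integral_comp_dyadicLevel hx, ← integral_mul_const]
  refine setIntegral_congr_fun measurableSet_Ici fun z hz => ?_
  simp only [integral_const_mul, integral_comp_dyadicLevel hz]

end LevelMeasure

section ProfileConvolution

lemma measureReal_singleton_mul_norm_le_integral_norm {α E : Type*} [MeasurableSpace α]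
    [MeasurableSingletonClass α] [NormedAddCommGroup E] {μ : Measure α} {f : α → E}
    (hf : Integrable f μ) (a : α) : μ.real {a} * ‖f a‖ ≤ ∫ b, ‖f b‖ ∂μ := by
  rw [← smul_eq_mul, ← integral_singleton (fun b => ‖f b‖)]
  exact setIntegral_le_integral hf.norm (Eventually.of_forall fun b => norm_nonneg (f b))

lemma norm_le_integral_norm_div_of_lt {k : ℤ → ℝ} (hk : Integrable k dyadicLevelMeasure)
    {m j : ℤ} (hmj : m < j) : ‖k j‖ ≤ (∫ i, ‖k i‖ ∂dyadicLevelMeasure) / 2 ^ m := by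
  have hmass : (2 : ℝ) ^ m ≤ dyadicLevelMeasure.real {j} := by
    rw [measureReal_def, dyadicLevelMeasure_singleton, ENNReal.toReal_ofReal (by positivity)]
    exact zpow_le_zpow_right₀ one_le_two (Int.le_sub_one_of_lt hmj)
  rw [le_div_iff₀' (by positivity)]
  exact (mul_le_mul_of_nonneg_right hmass (norm_nonneg _)).trans
    (measureReal_singleton_mul_norm_le_integral_norm hk j)

lemma integrableOn_Ioi_mul {k₁ k₂ : ℤ → ℝ} (hk₁ : Integrable k₁ dyadicLevelMeasure)
    (hk₂ : Integrable k₂ dyadicLevelMeasure) (m : ℤ) :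
    IntegrableOn (fun j => k₁ j * k₂ j) (Ioi m) dyadicLevelMeasure :=
  hk₁.integrableOn.mul_bdd (measurable_of_countable k₂).aestronglyMeasurable <|
    ae_restrict_of_forall_mem measurableSet_Ioi fun _ hj => norm_le_integral_norm_div_of_lt hk₂ hj

/-- The profile of the convolution of two kernels with profiles `k₁` and `k₂`: for `x` and `y` at
level `m`, the three summands come from the points `z` close to `x`, close to `y` and far from
both. -/
noncomputable def profileConv (k₁ k₂ : ℤ → ℝ) (m : ℤ) : ℝ :=
  (∫ j in Iio m, k₁ j ∂dyadicLevelMeasure) * k₂ m +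
    k₁ m * (∫ j in Iio m, k₂ j ∂dyadicLevelMeasure) +
    ∫ j in Ioi m, k₁ j * k₂ j ∂dyadicLevelMeasure

lemma mul_dyadicLevel_eq_indicator (k₁ k₂ : ℤ → ℝ) {x y z : ℝ} (hx : 0 ≤ x) (hy : 0 ≤ y)
    (hz : 0 ≤ z) (hxy : x ≠ y) (hxz : x ≠ z) (hyz : y ≠ z) {m : ℤ} (hm : dyadicLevel x y = m) :
    k₁ (dyadicLevel x z) * k₂ (dyadicLevel y z) =
      (Iio m).indicator k₁ (dyadicLevel x z) * k₂ m +
        k₁ m * (Iio m).indicator k₂ (dyadicLevel y z) +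
        (Ioi m).indicator (fun j => k₁ j * k₂ j) (dyadicLevel x z) := by
  subst hm
  rcases lt_trichotomy (dyadicLevel x z) (dyadicLevel x y) with hlt | heq | hgt
  · simp [dyadicLevel_eq_of_lt hx hy hz hxy hxz hlt, hlt, hlt.le]
  · simp [dyadicLevel_lt_of_eq hx hy hz hxy hxz hyz heq, heq]
  · have hyz_eq : dyadicLevel y z = dyadicLevel x z :=
      (dyadicLevel_comm y z).trans (dyadicLevel_eq_of_lt hx hz hy hxz hxy hgt)
    simp [hyz_eq, hgt, hgt.le]

lemma integral_mul_dyadicLevel {k₁ k₂ : ℤ → ℝ} (hk₁ : Integrable k₁ dyadicLevelMeasure)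
    (hk₂ : Integrable k₂ dyadicLevelMeasure) {x y : ℝ} (hx : 0 ≤ x) (hy : 0 ≤ y) (hxy : x ≠ y) :
    ∫ z in Ici 0, k₁ (dyadicLevel x z) * k₂ (dyadicLevel y z) =
      profileConv k₁ k₂ (dyadicLevel x y) := by
  set m := dyadicLevel x y with hm
  have near_x : IntegrableOn (fun z => (Iio m).indicator k₁ (dyadicLevel x z) * k₂ m) (Ici 0) :=
    ((measurePreserving_dyadicLevel hx).integrable_comp_of_integrable
      (hk₁.indicator measurableSet_Iio)).mul_const _
  have near_y : IntegrableOn (fun z => k₁ m * (Iio m).indicator k₂ (dyadicLevel y z)) (Ici 0) :=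
    ((measurePreserving_dyadicLevel hy).integrable_comp_of_integrable
      (hk₂.indicator measurableSet_Iio)).const_mul _
  have far : IntegrableOn (fun z => (Ioi m).indicator (fun j => k₁ j * k₂ j) (dyadicLevel x z))
      (Ici 0) :=
    (measurePreserving_dyadicLevel hx).integrable_comp_of_integrable
      ((integrableOn_Ioi_mul hk₁ hk₂ m).integrable_indicator measurableSet_Ioi)
  calc ∫ z in Ici 0, k₁ (dyadicLevel x z) * k₂ (dyadicLevel y z)
    _ = ∫ z in Ici 0, ((Iio m).indicator k₁ (dyadicLevel x z) * k₂ m +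
          k₁ m * (Iio m).indicator k₂ (dyadicLevel y z) +
          (Ioi m).indicator (fun j => k₁ j * k₂ j) (dyadicLevel x z)) := by
      refine integral_congr_ae ?_
      filter_upwards [ae_restrict_mem measurableSet_Ici, Measure.ae_ne _ x, Measure.ae_ne _ y]
        with z hz hzx hzy
      exact mul_dyadicLevel_eq_indicator k₁ k₂ hx hy hz hxy hzx.symm hzy.symm hm.symm
    _ = profileConv k₁ k₂ m := by
      rw [integral_add (by exact near_x.add near_y) far, integral_add near_x near_y,
        integral_mul_const, integral_const_mul]
      simp only [integral_comp_dyadicLevel hx, integral_comp_dyadicLevel hy,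
        integral_indicator measurableSet_Iio, integral_indicator measurableSet_Ioi, profileConv]

lemma tendsto_setIntegral_Ioi_atTop {E : Type*} [NormedAddCommGroup E] [NormedSpace ℝ E]
    {μ : Measure ℤ} {f : ℤ → E} (hf : Integrable f μ) :
    Tendsto (fun m => ∫ j in Ioi m, f j ∂μ) atTop (𝓝 0) := by
  have hIic := ((aecover_Iic tendsto_id).integral_tendsto_of_countably_generated hf).const_sub
    (∫ j, f j ∂μ)
  rw [sub_self] at hIic
  refine hIic.congr fun m => ?_
  rw [← compl_Iic, setIntegral_compl measurableSet_Iic hf]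
  rfl

-- Monotonicity gives `w m * |k₂ j| ≤ w j * |k₂ j|` for `m < j`, and the right side is bounded.
lemma tendsto_mul_setIntegral_Ioi_mul {μ : Measure ℤ} {w k₁ k₂ : ℤ → ℝ} {σ : ℝ} (hw : Monotone w)
    (hw₀ : ∀ m, 0 ≤ w m) (hk₁ : Integrable k₁ μ)
    (hσ : Tendsto (fun m => w m * k₂ m) atTop (𝓝 σ)) :
    Tendsto (fun m => w m * ∫ j in Ioi m, k₁ j * k₂ j ∂μ) atTop (𝓝 0) := by
  obtain ⟨M, hM⟩ := eventually_atTop.1 (hσ.norm.eventually_le_const (lt_add_one ‖σ‖))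
  have hbound := (tendsto_setIntegral_Ioi_atTop hk₁.norm).const_mul (‖σ‖ + 1)
  rw [mul_zero] at hbound
  refine squeeze_zero_norm' ?_ hbound
  filter_upwards [eventually_ge_atTop M] with m hm
  rw [← integral_const_mul, ← integral_const_mul]
  refine norm_integral_le_of_norm_le (hk₁.norm.integrableOn.const_mul _)
    (ae_restrict_of_forall_mem measurableSet_Ioi fun j (hj : m < j) => ?_)
  calc ‖w m * (k₁ j * k₂ j)‖ = w m * ‖k₂ j‖ * ‖k₁ j‖ := by
        rw [norm_mul, norm_mul, Real.norm_of_nonneg (hw₀ m)]; ring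
    _ ≤ w j * ‖k₂ j‖ * ‖k₁ j‖ := by gcongr; exact hw hj.le
    _ = ‖w j * k₂ j‖ * ‖k₁ j‖ := by rw [norm_mul, Real.norm_of_nonneg (hw₀ j)]
    _ ≤ (‖σ‖ + 1) * ‖k₁ j‖ := by gcongr; exact hM j (hm.trans hj.le)

lemma tendsto_mul_profileConv {w k₁ k₂ : ℤ → ℝ} {σ₁ σ₂ : ℝ} (hw : Monotone w)
    (hw₀ : ∀ m, 0 ≤ w m) (hk₁ : Integrable k₁ dyadicLevelMeasure)
    (hk₂ : Integrable k₂ dyadicLevelMeasure)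
    (hσ₁ : Tendsto (fun m => w m * k₁ m) atTop (𝓝 σ₁))
    (hσ₂ : Tendsto (fun m => w m * k₂ m) atTop (𝓝 σ₂)) :
    Tendsto (fun m => w m * profileConv k₁ k₂ m) atTop
      (𝓝 ((∫ j, k₁ j ∂dyadicLevelMeasure) * σ₂ + σ₁ * ∫ j, k₂ j ∂dyadicLevelMeasure)) := by
  have near_x := (aecover_Iio tendsto_id).integral_tendsto_of_countably_generated hk₁
  have near_y := (aecover_Iio tendsto_id).integral_tendsto_of_countably_generated hk₂
  have far := tendsto_mul_setIntegral_Ioi_mul hw hw₀ hk₁ hσ₂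
  rw [← add_zero (_ + _)]
  refine (((near_x.mul hσ₂).add (hσ₁.mul near_y)).add far).congr fun m => ?_
  simp only [profileConv, id]
  ring

end ProfileConvolution

section Kernel

/-- The class `𝒦`: nonnegative kernels on `ℝ⁺` that depend only on the dyadic distance and have
total mass one. A kernel is a function on `ℝ × ℝ` whose values outside `ℝ⁺ × ℝ⁺` are irrelevant. -/
structure IsDyadicKernel (K : ℝ → ℝ → ℝ) : Prop where
  nonneg : ∀ x y : ℝ, 0 ≤ x → 0 ≤ y → 0 ≤ K x y
  eq_of_dyadicDist_eq : ∀ x y x' y' : ℝ, 0 ≤ x → 0 ≤ y → 0 ≤ x' → 0 ≤ y' →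
    dyadicDist x y = dyadicDist x' y' → K x y = K x' y'
  exists_integral_eq_one : ∃ x, 0 ≤ x ∧ ∫ y in Ici 0, K x y = 1

/-- Stability of a kernel with parameter `σ`, relative to a weight `w` of the dyadic distance:
`w (δ(x, y)) * K x y → σ` as `δ(x, y) → ∞`. For `w r = r ^ 2` this is `1`-stability. -/
def IsDyadicStable (w : ℝ → ℝ) (K : ℝ → ℝ → ℝ) (σ : ℝ) : Prop :=
  ∀ ε : ℝ, 0 < ε → ∃ R : ℝ, ∀ x y : ℝ, 0 ≤ x → 0 ≤ y →
    R ≤ dyadicDist x y → |w (dyadicDist x y) * K x y - σ| < ε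

/-- The convolution of two kernels on `ℝ⁺`. -/
noncomputable def dyadicConv (K₁ K₂ : ℝ → ℝ → ℝ) (x y : ℝ) : ℝ :=
  ∫ z in Ici 0, K₁ x z * K₂ z y

/-- `k m` is the value of the kernel `K` at distance `2 ^ m`. The diagonal, which is a null set,
is left out. -/
def HasDyadicProfile (K : ℝ → ℝ → ℝ) (k : ℤ → ℝ) : Prop :=
  ∀ ⦃x y : ℝ⦄, 0 ≤ x → 0 ≤ y → x ≠ y → K x y = k (dyadicLevel x y)

namespace HasDyadicProfile

variable {K K₁ K₂ : ℝ → ℝ → ℝ} {k k₁ k₂ : ℤ → ℝ}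

lemma apply_zero_zpow (h : HasDyadicProfile K k) (m : ℤ) : K 0 (2 ^ (m - 1)) = k m := by
  have hpos : (0 : ℝ) < 2 ^ (m - 1) := by positivity
  rw [h le_rfl hpos.le hpos.ne, dyadicLevel_zero_zpow]

lemma integral_eq (h : HasDyadicProfile K k) {x : ℝ} (hx : 0 ≤ x) :
    ∫ y in Ici 0, K x y = ∫ j, k j ∂dyadicLevelMeasure := by
  rw [← integral_comp_dyadicLevel hx]
  refine integral_congr_ae ?_
  filter_upwards [ae_restrict_mem measurableSet_Ici, Measure.ae_ne _ x] with y hy hyx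
  exact h hx hy hyx.symm

lemma isDyadicStable_iff (h : HasDyadicProfile K k) {w : ℝ → ℝ} {σ : ℝ} :
    IsDyadicStable w K σ ↔ Tendsto (fun m : ℤ => w (2 ^ m) * k m) atTop (𝓝 σ) := by
  simp only [Metric.tendsto_atTop, Real.dist_eq]
  refine forall₂_congr fun ε _ => ⟨fun ⟨R, hR⟩ => ?_, fun ⟨M, hM⟩ => ⟨2 ^ M, ?_⟩⟩
  · obtain ⟨n, hn⟩ := pow_unbounded_of_one_lt R one_lt_two
    refine ⟨n, fun m hm => ?_⟩
    have hle : R ≤ 2 ^ m := hn.le.trans <| by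
      simpa only [zpow_natCast] using zpow_le_zpow_right₀ (one_le_two (α := ℝ)) hm
    have hdist := dyadicDist_zero_zpow m
    simpa only [hdist, h.apply_zero_zpow] using hR 0 (2 ^ (m - 1)) le_rfl (by positivity)
      (hle.trans_eq hdist.symm)
  · intro x y hx hy hMxy
    have hxy : x ≠ y := by
      rw [ne_eq, ← dyadicDist_eq_zero_iff hx hy]
      exact (hMxy.trans_lt' (by positivity)).ne'
    rw [dyadicDist_eq_zpow hx hy hxy] at hMxy ⊢
    rw [h hx hy hxy]
    exact hM _ ((zpow_le_zpow_iff_right₀ one_lt_two).1 hMxy)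

lemma dyadicConv_eq_integral (h₁ : HasDyadicProfile K₁ k₁) (h₂ : HasDyadicProfile K₂ k₂)
    {x y : ℝ} (hx : 0 ≤ x) (hy : 0 ≤ y) :
    dyadicConv K₁ K₂ x y = ∫ z in Ici 0, k₁ (dyadicLevel x z) * k₂ (dyadicLevel z y) := by
  refine integral_congr_ae ?_
  filter_upwards [ae_restrict_mem measurableSet_Ici, Measure.ae_ne _ x, Measure.ae_ne _ y]
    with z hz hzx hzy
  rw [h₁ hx hz hzx.symm, h₂ hz hy hzy]

lemma dyadicConv_self (h₁ : HasDyadicProfile K₁ k₁) (h₂ : HasDyadicProfile K₂ k₂) {x : ℝ}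
    (hx : 0 ≤ x) : dyadicConv K₁ K₂ x x = ∫ j, k₁ j * k₂ j ∂dyadicLevelMeasure := by
  simp only [h₁.dyadicConv_eq_integral h₂ hx hx, dyadicLevel_comm _ x]
  exact integral_comp_dyadicLevel hx fun j => k₁ j * k₂ j

lemma dyadicConv (h₁ : HasDyadicProfile K₁ k₁) (h₂ : HasDyadicProfile K₂ k₂)
    (hk₁ : Integrable k₁ dyadicLevelMeasure) (hk₂ : Integrable k₂ dyadicLevelMeasure) :
    HasDyadicProfile (dyadicConv K₁ K₂) (profileConv k₁ k₂) := fun x y hx hy hxy => by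
  rw [h₁.dyadicConv_eq_integral h₂ hx hy, ← integral_mul_dyadicLevel hk₁ hk₂ hx hy hxy]
  simp only [dyadicLevel_comm y]

lemma integral_dyadicConv (h₁ : HasDyadicProfile K₁ k₁) (h₂ : HasDyadicProfile K₂ k₂)
    (hk₁ : Integrable k₁ dyadicLevelMeasure) (hk₂ : Integrable k₂ dyadicLevelMeasure) {x : ℝ}
    (hx : 0 ≤ x) : ∫ y in Ici 0, _root_.dyadicConv K₁ K₂ x y =
      (∫ j, k₁ j ∂dyadicLevelMeasure) * ∫ j, k₂ j ∂dyadicLevelMeasure := by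
  rw [← integral_integral_dyadicLevel hk₁ hk₂ hx]
  exact setIntegral_congr_fun measurableSet_Ici fun y hy => h₁.dyadicConv_eq_integral h₂ hx hy

-- The value on the diagonal may be the junk value of a divergent integral, but it is the same at
-- every point.
lemma dyadicConv_eq_of_dyadicDist_eq (h₁ : HasDyadicProfile K₁ k₁) (h₂ : HasDyadicProfile K₂ k₂)
    (hk₁ : Integrable k₁ dyadicLevelMeasure) (hk₂ : Integrable k₂ dyadicLevelMeasure)
    {x y x' y' : ℝ} (hx : 0 ≤ x) (hy : 0 ≤ y) (hx' : 0 ≤ x') (hy' : 0 ≤ y')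
    (hdist : dyadicDist x y = dyadicDist x' y') :
    _root_.dyadicConv K₁ K₂ x y = _root_.dyadicConv K₁ K₂ x' y' := by
  have hiff : x = y ↔ x' = y' := by
    rw [← dyadicDist_eq_zero_iff hx hy, hdist, dyadicDist_eq_zero_iff hx' hy']
  by_cases hxy : x = y
  · obtain rfl := hxy
    obtain rfl := hiff.1 rfl
    rw [h₁.dyadicConv_self h₂ hx, h₁.dyadicConv_self h₂ hx']
  · have hxy' := hiff.not.1 hxy
    rw [dyadicDist_eq_zpow hx hy hxy, dyadicDist_eq_zpow hx' hy' hxy'] at hdist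
    have hlevel := zpow_right_injective₀ two_pos (by norm_num) hdist
    have hconv := h₁.dyadicConv h₂ hk₁ hk₂
    rw [hconv hx hy hxy, hconv hx' hy' hxy', hlevel]

end HasDyadicProfile

namespace IsDyadicKernel

variable {K K₁ K₂ : ℝ → ℝ → ℝ}

lemma exists_hasDyadicProfile (h : IsDyadicKernel K) :
    ∃ k, HasDyadicProfile K k ∧ Integrable k dyadicLevelMeasure ∧
      ∫ j, k j ∂dyadicLevelMeasure = 1 := by
  have hprofile : HasDyadicProfile K fun m => K 0 (2 ^ (m - 1)) := fun x y hx hy hxy =>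
    h.eq_of_dyadicDist_eq _ _ _ _ hx hy le_rfl (by positivity) <| by
      rw [dyadicDist_eq_zpow hx hy hxy, dyadicDist_zero_zpow]
  obtain ⟨x, hx, hone⟩ := h.exists_integral_eq_one
  rw [hprofile.integral_eq hx] at hone
  exact ⟨_, hprofile, .of_integral_ne_zero (hone ▸ one_ne_zero), hone⟩

lemma integral_eq_one (h : IsDyadicKernel K) {x : ℝ} (hx : 0 ≤ x) : ∫ y in Ici 0, K x y = 1 := by
  obtain ⟨k, hk, -, hone⟩ := h.exists_hasDyadicProfile
  rw [hk.integral_eq hx, hone]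

lemma dyadicConv (h₁ : IsDyadicKernel K₁) (h₂ : IsDyadicKernel K₂) :
    IsDyadicKernel (dyadicConv K₁ K₂) := by
  obtain ⟨k₁, hK₁, hk₁, hone₁⟩ := h₁.exists_hasDyadicProfile
  obtain ⟨k₂, hK₂, hk₂, hone₂⟩ := h₂.exists_hasDyadicProfile
  refine ⟨fun x y hx hy => ?_, fun x y x' y' => ?_, 0, le_rfl, ?_⟩
  · exact setIntegral_nonneg measurableSet_Ici fun z hz =>
      mul_nonneg (h₁.nonneg x z hx hz) (h₂.nonneg z y hz hy)
  · exact hK₁.dyadicConv_eq_of_dyadicDist_eq hK₂ hk₁ hk₂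
  · rw [hK₁.integral_dyadicConv hK₂ hk₁ hk₂ le_rfl, hone₁, hone₂, one_mul]

end IsDyadicKernel

lemma IsDyadicStable.dyadicConv {K₁ K₂ : ℝ → ℝ → ℝ} {w : ℝ → ℝ} {σ₁ σ₂ : ℝ}
    (hw : MonotoneOn w (Ioi 0)) (hw₀ : ∀ r, 0 < r → 0 ≤ w r) (h₁ : IsDyadicKernel K₁)
    (h₂ : IsDyadicKernel K₂) (hσ₁ : IsDyadicStable w K₁ σ₁) (hσ₂ : IsDyadicStable w K₂ σ₂) :
    IsDyadicStable w (dyadicConv K₁ K₂) (σ₁ + σ₂) := by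
  obtain ⟨k₁, hK₁, hk₁, hone₁⟩ := h₁.exists_hasDyadicProfile
  obtain ⟨k₂, hK₂, hk₂, hone₂⟩ := h₂.exists_hasDyadicProfile
  have hzpow (m : ℤ) : (2 : ℝ) ^ m ∈ Ioi 0 := mem_Ioi.2 (zpow_pos two_pos m)
  have hlim := tendsto_mul_profileConv
    (fun i j hij => hw (hzpow i) (hzpow j) (zpow_le_zpow_right₀ one_le_two hij))
    (fun m => hw₀ _ (hzpow m)) hk₁ hk₂ (hK₁.isDyadicStable_iff.1 hσ₁) (hK₂.isDyadicStable_iff.1 hσ₂)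
  rw [hone₁, hone₂, one_mul, mul_one, add_comm σ₂] at hlim
  exact (hK₁.dyadicConv hK₂ hk₁ hk₂).isDyadicStable_iff.2 hlim

end Kernel

theorem kernel_convolution_stable_general {K₁ K₂ : ℝ → ℝ → ℝ} {w : ℝ → ℝ} {σ₁ σ₂ : ℝ}
    (hw : MonotoneOn w (Ioi 0)) (hw₀ : ∀ r, 0 < r → 0 ≤ w r) (h₁ : IsDyadicKernel K₁)
    (h₂ : IsDyadicKernel K₂) (hσ₁ : IsDyadicStable w K₁ σ₁) (hσ₂ : IsDyadicStable w K₂ σ₂) :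
    IsDyadicKernel (dyadicConv K₁ K₂) ∧ IsDyadicStable w (dyadicConv K₁ K₂) (σ₁ + σ₂) :=
  ⟨h₁.dyadicConv h₂, hσ₁.dyadicConv hw hw₀ h₁ h₂ hσ₂⟩

/-- Lemma 9 (b): the convolution of two `1`-stable kernels in `𝒦`, with parameters `σ₁` and
`σ₂`, is a kernel in `𝒦` which is `1`-stable with parameter `σ₁ + σ₂`. -/
theorem kernel_convolution_stable (K₁ K₂ K₃ : ℝ → ℝ → ℝ) (σ₁ σ₂ : ℝ)
    (hσ₁ : 0 < σ₁) (hσ₂ : 0 < σ₂)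
    (hK₁0 : ∀ x y : ℝ, 0 ≤ x → 0 ≤ y → 0 ≤ K₁ x y)
    (hK₁dist : ∀ x y x' y' : ℝ, 0 ≤ x → 0 ≤ y → 0 ≤ x' → 0 ≤ y' →
      dyadicDist x y = dyadicDist x' y' → K₁ x y = K₁ x' y')
    (x₁ : ℝ) (hx₁ : 0 ≤ x₁) (hK₁norm : (∫ y in Set.Ici (0:ℝ), K₁ x₁ y) = 1)
    (hK₂0 : ∀ x y : ℝ, 0 ≤ x → 0 ≤ y → 0 ≤ K₂ x y)
    (hK₂dist : ∀ x y x' y' : ℝ, 0 ≤ x → 0 ≤ y → 0 ≤ x' → 0 ≤ y' →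
      dyadicDist x y = dyadicDist x' y' → K₂ x y = K₂ x' y')
    (x₂ : ℝ) (hx₂ : 0 ≤ x₂) (hK₂norm : (∫ y in Set.Ici (0:ℝ), K₂ x₂ y) = 1)
    (hstab₁ : ∀ ε : ℝ, 0 < ε → ∃ R : ℝ, ∀ x y : ℝ, 0 ≤ x → 0 ≤ y →
      R ≤ dyadicDist x y → |dyadicDist x y ^ 2 * K₁ x y - σ₁| < ε)
    (hstab₂ : ∀ ε : ℝ, 0 < ε → ∃ R : ℝ, ∀ x y : ℝ, 0 ≤ x → 0 ≤ y →
      R ≤ dyadicDist x y → |dyadicDist x y ^ 2 * K₂ x y - σ₂| < ε)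
    (hK₃ : ∀ x y : ℝ, K₃ x y = ∫ z in Set.Ici (0:ℝ), K₁ x z * K₂ z y) :
    (∀ x y : ℝ, 0 ≤ x → 0 ≤ y → 0 ≤ K₃ x y) ∧
    (∀ x y x' y' : ℝ, 0 ≤ x → 0 ≤ y → 0 ≤ x' → 0 ≤ y' →
      dyadicDist x y = dyadicDist x' y' → K₃ x y = K₃ x' y') ∧
    (∀ x : ℝ, 0 ≤ x → (∫ y in Set.Ici (0:ℝ), K₃ x y) = 1) ∧
    (∀ ε : ℝ, 0 < ε → ∃ R : ℝ, ∀ x y : ℝ, 0 ≤ x → 0 ≤ y →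
      R ≤ dyadicDist x y → |dyadicDist x y ^ 2 * K₃ x y - (σ₁ + σ₂)| < ε) := by
  obtain rfl : K₃ = dyadicConv K₁ K₂ := funext₂ hK₃
  obtain ⟨hK, hσ⟩ := kernel_convolution_stable_general (w := fun r => r ^ 2)
    (fun r (hr : 0 < r) s _ hrs => pow_le_pow_left₀ hr.le hrs 2) (fun r _ => sq_nonneg r)
    ⟨hK₁0, hK₁dist, x₁, hx₁, hK₁norm⟩ ⟨hK₂0, hK₂dist, x₂, hx₂, hK₂norm⟩ hstab₁ hstab₂
  exact ⟨hK.nonneg, hK.eq_of_dyadicDist_eq, fun _ => hK.integral_eq_one, hσ⟩
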